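/- Suppose f satisfies the (2r,4r)-restricted strong convexity and smoothness properties with parameter δ ∈ [0,1). Fix Y* ∈ ℝ^{p×r}_*, set X* := Y*Y*ᵀ, κ* := σ_1(Y*)/σ_r(Y*) and N := sup{⟨B, ∇f(X*)⟩ : rank(B) ≤ r, ‖B‖_F ≤ 1}. Let 0 ≤ μ ≤ 1/3 and Y ∈ ℝ^{p×r}_* with d(Y,Y*) ≤ μσ_r(Y*)/κ*. Then for every θ ∈ ℝ^{p×r} with Yᵀθ symmetric, the quadratic form Q(θ) := ∇²f(YYᵀ)[Yθᵀ + θYᵀ, Yθᵀ + θYᵀ] + 2⟨∇f(YYᵀ), θθᵀ⟩ satisfies Q(θ) ≥ [ (2(1 − μ/κ*)² − (14/3)μ)·σ_r(Y*)² − (4δ(σ_1(Y*) + μσ_r(Y*)/κ*)² + (14/3)δμ·σ_r(Y*)² + 2N) ]·‖θ‖²_F and Q(θ) ≤ [ 4(σ_1(Y*) + μσ_r(Y*)/κ*)² + (14/3)μ·σ_r(Y*)² + 4δ(σ_1(Y*) + μσ_r(Y*)/κ*)² + (14/3)δμ·σ_r(Y*)² + 2N ]·‖θ‖²_F. In particular,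 if additionally (1 − μ/κ*)² − 7μ/3 > 0, δ ≤ ((1 − μ/κ*)² − 7μ/3)/(4(2(κ* + μ/κ*)² + 7μ/3)) and N ≤ ((1 − μ/κ*)² − 7μ/3)·σ_r(Y*)²/4, then Q(θ) ≥ ((1 − μ/κ*)² − 7μ/3)·σ_r(Y*)²·‖θ‖²_F, so h is geodesically strongly convex on this region. -/

import Mathlib

open Matrix

/-- Trace inner product `⟨A,B⟩ = tr(AᵀB)`. -/
noncomputable def trInner {m n : ℕ} (A B : Matrix (Fin m) (Fin n) ℝ) : ℝ :=
  ∑ i, ∑ j, A i j * B i j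

/-- Frobenius norm. -/
noncomputable def frob {m n : ℕ} (A : Matrix (Fin m) (Fin n) ℝ) : ℝ :=
  Real.sqrt (∑ i, ∑ j, (A i j) ^ 2)

open scoped Classical in
/-- The `i`-th largest eigenvalue (1-indexed, `1 ≤ i ≤ n`) of a Hermitian matrix; junk value 0
otherwise. -/
noncomputable def eigVal {n : ℕ} (A : Matrix (Fin n) (Fin n) ℝ) (i : ℕ) : ℝ :=
  if hA : A.IsHermitian then
    if h : n - i < n then hA.eigenvalues (Tuple.sort hA.eigenvalues ⟨n - i, h⟩) else 0
  else 0

/-- The `i`-th largest singular value (1-indexed) of `Y`, so `sval Y 1 = ‖Y‖` (spectral norm)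
and `sval Y r` is the least singular value. -/
noncomputable def sval {p r : ℕ} (Y : Matrix (Fin p) (Fin r) ℝ) (i : ℕ) : ℝ :=
  Real.sqrt (eigVal (Yᵀ * Y) i)

/-- `Q` is an orthogonal matrix. -/
def IsOrtho {r : ℕ} (Q : Matrix (Fin r) (Fin r) ℝ) : Prop := Qᵀ * Q = 1

/-- The quotient distance `d(Y₁,Y₂) = min_{Q ∈ O(r)} ‖Y₂Q − Y₁‖_F`. -/
noncomputable def dOrth {p r : ℕ} (Y₁ Y₂ : Matrix (Fin p) (Fin r) ℝ) : ℝ :=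
  sInf {c | ∃ Q : Matrix (Fin r) (Fin r) ℝ, IsOrtho Q ∧ c = frob (Y₂ * Q - Y₁)}


section helpers

lemma trInner_eq_trace {m n : ℕ} (A B : Matrix (Fin m) (Fin n) ℝ) :
    trInner A B = (Aᵀ * B).trace := by
  simp only [trInner, Matrix.trace, Matrix.diag, Matrix.mul_apply, Matrix.transpose_apply]
  rw [Finset.sum_comm]

lemma trInner_comm {m n : ℕ} (A B : Matrix (Fin m) (Fin n) ℝ) :
    trInner A B = trInner B A := by
  simp only [trInner, mul_comm]

lemma trInner_add_right {m n : ℕ} (A B C : Matrix (Fin m) (Fin n) ℝ) :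
    trInner A (B + C) = trInner A B + trInner A C := by
  simp only [trInner_eq_trace, Matrix.mul_add, Matrix.trace_add]

lemma trInner_sub_right {m n : ℕ} (A B C : Matrix (Fin m) (Fin n) ℝ) :
    trInner A (B - C) = trInner A B - trInner A C := by
  simp only [trInner_eq_trace, Matrix.mul_sub, Matrix.trace_sub]

lemma trInner_smul_right {m n : ℕ} (A B : Matrix (Fin m) (Fin n) ℝ) (c : ℝ) :
    trInner A (c • B) = c * trInner A B := by
  simp [trInner_eq_trace, Matrix.trace_smul]

lemma trInner_add_left {m n : ℕ} (A B C : Matrix (Fin m) (Fin n) ℝ) :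
    trInner (B + C) A = trInner B A + trInner C A := by
  simp only [trInner_comm _ A, trInner_add_right]

lemma trInner_sub_left {m n : ℕ} (A B C : Matrix (Fin m) (Fin n) ℝ) :
    trInner (B - C) A = trInner B A - trInner C A := by
  simp only [trInner_comm _ A, trInner_sub_right]

lemma trInner_smul_left {m n : ℕ} (A B : Matrix (Fin m) (Fin n) ℝ) (c : ℝ) :
    trInner (c • B) A = c * trInner B A := by
  simp only [trInner_comm _ A, trInner_smul_right]

lemma frob_nonneg {m n : ℕ} (A : Matrix (Fin m) (Fin n) ℝ) : 0 ≤ frob A := Real.sqrt_nonneg _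

lemma frob_sq {m n : ℕ} (A : Matrix (Fin m) (Fin n) ℝ) : frob A ^ 2 = trInner A A := by
  unfold frob trInner
  rw [Real.sq_sqrt (by positivity)]
  simp only [sq]

attribute [local instance] Matrix.frobeniusNormedAddCommGroup in
lemma frob_eq_norm {m n : ℕ} (A : Matrix (Fin m) (Fin n) ℝ) : frob A = ‖A‖ := by
  rw [Matrix.frobenius_norm_def, frob, Real.sqrt_eq_rpow]
  simp

attribute [local instance] Matrix.frobeniusNormedAddCommGroup in
lemma frob_mul_le {l m n : ℕ} (A : Matrix (Fin l) (Fin m) ℝ) (B : Matrix (Fin m) (Fin n) ℝ) :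
    frob (A * B) ≤ frob A * frob B := by
  simp only [frob_eq_norm]; exact Matrix.frobenius_norm_mul A B

attribute [local instance] Matrix.frobeniusNormedAddCommGroup in
lemma frob_add_le {m n : ℕ} (A B : Matrix (Fin m) (Fin n) ℝ) :
    frob (A + B) ≤ frob A + frob B := by
  simp only [frob_eq_norm]; exact norm_add_le A B

attribute [local instance] Matrix.frobeniusNormedAddCommGroup in
lemma frob_neg {m n : ℕ} (A : Matrix (Fin m) (Fin n) ℝ) : frob (-A) = frob A := by
  simp only [frob_eq_norm]; exact norm_neg A

attribute [local instance] Matrix.frobeniusNormedAddCommGroup in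
lemma frob_eq_zero {m n : ℕ} {A : Matrix (Fin m) (Fin n) ℝ} (h : frob A = 0) : A = 0 := by
  rw [frob_eq_norm] at h; exact norm_eq_zero.mp h

attribute [local instance] Matrix.frobeniusNormedAddCommGroup Matrix.frobeniusNormedSpace in
lemma frob_smul {m n : ℕ} (c : ℝ) (A : Matrix (Fin m) (Fin n) ℝ) :
    frob (c • A) = |c| * frob A := by
  simp only [frob_eq_norm]; rw [norm_smul]; rfl

lemma frob_zero {m n : ℕ} : frob (0 : Matrix (Fin m) (Fin n) ℝ) = 0 := by
  simp [frob]

lemma frob_transpose {m n : ℕ} (A : Matrix (Fin m) (Fin n) ℝ) : frob Aᵀ = frob A := by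
  unfold frob; rw [Finset.sum_comm]; rfl

lemma trInner_le {m n : ℕ} (A B : Matrix (Fin m) (Fin n) ℝ) :
    trInner A B ≤ frob A * frob B := by
  have hA := frob_nonneg A
  have hB := frob_nonneg B
  by_cases h : frob B = 0
  · rw [frob_eq_zero h]; simp [trInner, frob]
  have hB' : 0 < frob B := lt_of_le_of_ne hB (Ne.symm h)
  have h1 : 0 ≤ trInner (frob B • A - frob A • B) (frob B • A - frob A • B) := by
    rw [← frob_sq]; positivity
  simp only [trInner_sub_left, trInner_sub_right, trInner_smul_left, trInner_smul_right,
    trInner_comm B A] at h1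
  rw [← frob_sq, ← frob_sq] at h1
  by_cases h' : frob A = 0
  · rw [frob_eq_zero h']; simp [trInner, frob]
  have hA' : 0 < frob A := lt_of_le_of_ne hA (Ne.symm h')
  have h2 : 0 < frob A * frob B := by positivity
  have h3 : 0 ≤ (frob A * frob B) * (frob A * frob B - trInner A B) := by nlinarith
  nlinarith [nonneg_of_mul_nonneg_right h3 h2]

/-- second order bound on a line -/
lemma taylor_lower (h h' h'' : ℝ → ℝ) (c : ℝ) (h1 : ∀ t, HasDerivAt h (h' t) t)
    (h2 : ∀ t, HasDerivAt h' (h'' t) t) (hc : ∀ t, c ≤ h'' t) :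
    h 0 + h' 0 + c / 2 ≤ h 1 := by
  have m1 : Monotone (fun t => h' t - c * t) := by
    have hd : ∀ t, HasDerivAt (fun t => h' t - c * t) (h'' t - c * 1) t := fun t =>
      (h2 t).sub ((hasDerivAt_id t).const_mul c)
    apply monotone_of_deriv_nonneg (fun t => (hd t).differentiableAt)
    intro t; rw [(hd t).deriv]; linarith [hc t]
  have hd : ∀ t, HasDerivAt (fun t => h t - h' 0 * t - c / 2 * t ^ 2)
      (h' t - h' 0 * 1 - c / 2 * (2 * t)) t := fun t => by
    have := ((h1 t).sub ((hasDerivAt_id t).const_mul (h' 0))).sub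
      ((hasDerivAt_pow 2 t).const_mul (c / 2))
    simp only [Nat.cast_ofNat, Nat.add_one_sub_one, pow_one] at this
    exact this
  have m2 : MonotoneOn (fun t => h t - h' 0 * t - c / 2 * t ^ 2) (Set.Ici 0) := by
    apply monotoneOn_of_deriv_nonneg (convex_Ici 0)
    · exact fun t _ => (hd t).continuousAt.continuousWithinAt
    · exact fun t _ => (hd t).differentiableAt.differentiableWithinAt
    · intro t ht
      rw [interior_Ici] at ht
      rw [(hd t).deriv]
      have := m1 (le_of_lt ht)
      simp only at this
      linarith
  have := m2 (Set.mem_Ici.mpr le_rfl) (Set.mem_Ici.mpr zero_le_one) zero_le_one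
  simp only at this
  linarith

lemma taylor_upper (h h' h'' : ℝ → ℝ) (c : ℝ) (h1 : ∀ t, HasDerivAt h (h' t) t)
    (h2 : ∀ t, HasDerivAt h' (h'' t) t) (hc : ∀ t, h'' t ≤ c) :
    h 1 ≤ h 0 + h' 0 + c / 2 := by
  have := taylor_lower (fun t => - h t) (fun t => - h' t) (fun t => - h'' t) (-c)
    (fun t => (h1 t).neg) (fun t => (h2 t).neg) (fun t => by linarith [hc t])
  linarith

lemma line_bounds {p : ℕ}
    (f : Matrix (Fin p) (Fin p) ℝ → ℝ)
    (gradf : Matrix (Fin p) (Fin p) ℝ → Matrix (Fin p) (Fin p) ℝ)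
    (hessf : Matrix (Fin p) (Fin p) ℝ → Matrix (Fin p) (Fin p) ℝ → ℝ)
    (hgradf : ∀ X D : Matrix (Fin p) (Fin p) ℝ,
      HasDerivAt (fun t : ℝ => f (X + t • D)) (trInner (gradf X) D) 0)
    (hhessf : ∀ X G : Matrix (Fin p) (Fin p) ℝ,
      HasDerivAt (fun t : ℝ => trInner (gradf (X + t • G)) G) (hessf X G) 0)
    (a b : ℝ) (x v : Matrix (Fin p) (Fin p) ℝ)
    (hb : ∀ t : ℝ, a ≤ hessf (x + t • v) v ∧ hessf (x + t • v) v ≤ b) :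
    f x + trInner (gradf x) v + a / 2 ≤ f (x + v) ∧
    f (x + v) ≤ f x + trInner (gradf x) v + b / 2 := by
  have h1 : ∀ t : ℝ, HasDerivAt (fun t : ℝ => f (x + t • v))
      (trInner (gradf (x + t • v)) v) t := fun t => by
    have h0 := hgradf (x + t • v) v
    rw [← sub_self t] at h0
    have := h0.comp_sub_const (x := t) (a := t)
    have e : (fun s : ℝ => f (x + t • v + (s - t) • v)) = fun s => f (x + s • v) := by
      funext s; congr 1; module
    rw [e] at this; exact this
  have h2 : ∀ t : ℝ, HasDerivAt (fun t : ℝ => trInner (gradf (x + t • v)) v)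
      (hessf (x + t • v) v) t := fun t => by
    have h0 := hhessf (x + t • v) v
    rw [← sub_self t] at h0
    have := h0.comp_sub_const (x := t) (a := t)
    have e : (fun s : ℝ => trInner (gradf (x + t • v + (s - t) • v)) v) =
        fun s => trInner (gradf (x + s • v)) v := by
      funext s; congr 2; module
    rw [e] at this; exact this
  have l := taylor_lower _ _ _ a h1 h2 (fun t => (hb t).1)
  have u := taylor_upper _ _ _ b h1 h2 (fun t => (hb t).2)
  simp only [zero_smul, one_smul, add_zero] at l u
  exact ⟨l, u⟩

/-- Lipschitz-type estimate of the gradient, on a plane where the restricted bounds hold. -/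
lemma grad_diff {p r : ℕ}
    (f : Matrix (Fin p) (Fin p) ℝ → ℝ)
    (gradf : Matrix (Fin p) (Fin p) ℝ → Matrix (Fin p) (Fin p) ℝ)
    (hessf : Matrix (Fin p) (Fin p) ℝ → Matrix (Fin p) (Fin p) ℝ → ℝ)
    (hgradf : ∀ X D : Matrix (Fin p) (Fin p) ℝ,
      HasDerivAt (fun t : ℝ => f (X + t • D)) (trInner (gradf X) D) 0)
    (hhessf : ∀ X G : Matrix (Fin p) (Fin p) ℝ,
      HasDerivAt (fun t : ℝ => trInner (gradf (X + t • G)) G) (hessf X G) 0)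
    (δ : ℝ)
    (hRSCS : ∀ X G : Matrix (Fin p) (Fin p) ℝ, X.rank ≤ 2 * r → G.rank ≤ 4 * r →
      (1 - δ) * (frob G) ^ 2 ≤ hessf X G ∧ hessf X G ≤ (1 + δ) * (frob G) ^ 2)
    (A E B : Matrix (Fin p) (Fin p) ℝ)
    (hr1 : ∀ t s : ℝ, (A + t • E + s • B).rank ≤ 2 * r)
    (hr2 : ∀ t s : ℝ, (t • E + s • B).rank ≤ 4 * r) :
    trInner (gradf (A + E)) B - trInner (gradf A) B ≤
      trInner E B + δ * (frob E * frob B) := by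
  by_cases hE : frob E = 0
  · rw [frob_eq_zero hE]; simp [trInner, frob]
  by_cases hB : frob B = 0
  · rw [frob_eq_zero hB]; simp [trInner, frob]
  have hE' : 0 < frob E := lt_of_le_of_ne (frob_nonneg _) (Ne.symm hE)
  have hB' : 0 < frob B := lt_of_le_of_ne (frob_nonneg _) (Ne.symm hB)
  have key : ∀ t0 t s : ℝ,
      f (A + t0 • E) + trInner (gradf (A + t0 • E)) (t • E + s • B)
        + ((1 - δ) * (frob (t • E + s • B)) ^ 2) / 2 ≤ f (A + t0 • E + (t • E + s • B)) ∧
      f (A + t0 • E + (t • E + s • B)) ≤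
        f (A + t0 • E) + trInner (gradf (A + t0 • E)) (t • E + s • B)
        + ((1 + δ) * (frob (t • E + s • B)) ^ 2) / 2 := by
    intro t0 t s
    apply line_bounds f gradf hessf hgradf hhessf
    intro q
    apply hRSCS
    · have := hr1 (t0 + q * t) (q * s)
      convert this using 2
      module
    · exact hr2 t s
  set l : ℝ := frob E / (2 * frob B) with hl
  have hl0 : 0 < l := by positivity
  have k1 := (key 0 (1/2) l).2
  have k2 := (key 0 (1/2) (-l)).1
  have k3 := (key 1 (-1/2) l).1
  have k4 := (key 1 (-1/2) (-l)).2
  have e1 : A + (0:ℝ) • E + ((1/2 : ℝ) • E + l • B) = A + (1/2 : ℝ) • E + l • B := by module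
  have e2 : A + (0:ℝ) • E + ((1/2 : ℝ) • E + (-l) • B) = A + (1/2 : ℝ) • E + (-l) • B := by module
  have e3 : A + (1:ℝ) • E + ((-1/2 : ℝ) • E + l • B) = A + (1/2 : ℝ) • E + l • B := by module
  have e4 : A + (1:ℝ) • E + ((-1/2 : ℝ) • E + (-l) • B) = A + (1/2 : ℝ) • E + (-l) • B := by module
  rw [e1] at k1
  rw [e2] at k2
  rw [e3] at k3
  rw [e4] at k4
  simp only [frob_sq, trInner_add_left, trInner_add_right, trInner_smul_left, trInner_smul_right,
    trInner_comm B E, zero_smul, one_smul, add_zero] at k1 k2 k3 k4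
  rw [← frob_sq, ← frob_sq] at k1 k2 k3 k4
  have hlB : l * frob B = frob E / 2 := by rw [hl]; field_simp
  have hlB2 : l ^ 2 * frob B ^ 2 = frob E ^ 2 / 4 := by rw [← mul_pow, hlB]; ring
  have main : l * (trInner (gradf (A + E)) B - trInner (gradf A) B) ≤
      l * (trInner E B + δ * (frob E * frob B)) := by
    have : l * (trInner E B + δ * (frob E * frob B))
      = l * trInner E B + δ * (frob E ^ 2 / 4 + l ^ 2 * frob B ^ 2) := by
      rw [hlB2]
      linear_combination δ * frob E * hlB
    rw [this]
    linarith
  exact le_of_mul_le_mul_left main hl0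

end helpers
section helpers2

lemma rank_add_le_aux {m n : ℕ} (A B : Matrix (Fin m) (Fin n) ℝ) :
    (A + B).rank ≤ A.rank + B.rank := by
  unfold Matrix.rank
  rw [Matrix.mulVecLin_add]
  refine (Submodule.finrank_mono (LinearMap.range_add_le _ _)).trans ?_
  exact Submodule.finrank_add_le_finrank_add_finrank _ _

lemma hermitian_bounds {r m : ℕ} (A : Matrix (Fin r) (Fin r) ℝ) (hA : A.IsHermitian) (a b : ℝ)
    (ha : ∀ i, a ≤ hA.eigenvalues i) (hb : ∀ i, hA.eigenvalues i ≤ b)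
    (M : Matrix (Fin r) (Fin m) ℝ) :
    a * frob M ^ 2 ≤ (Mᵀ * A * M).trace ∧ (Mᵀ * A * M).trace ≤ b * frob M ^ 2 := by
  have hp : ∀ c e : ℝ, (∀ i, 0 ≤ c * hA.eigenvalues i + e) →
      0 ≤ c * (Mᵀ * A * M).trace + e * frob M ^ 2 := by
    intro c e hce
    set U : Matrix (Fin r) (Fin r) ℝ := (hA.eigenvectorUnitary : Matrix (Fin r) (Fin r) ℝ) with hU
    have hUU : U * Uᵀ = 1 := by
      have := Matrix.mem_unitaryGroup_iff.mp hA.eigenvectorUnitary.2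
      rwa [Matrix.star_eq_conjTranspose, Matrix.conjTranspose_eq_transpose_of_trivial] at this
    have hs : A = U * diagonal hA.eigenvalues * Uᵀ := by
      have := hA.spectral_theorem
      rw [Unitary.conjStarAlgAut_apply] at this
      rw [Matrix.star_eq_conjTranspose, Matrix.conjTranspose_eq_transpose_of_trivial] at this
      exact this
    have hd : (diagonal (fun i => c * hA.eigenvalues i + e)).PosSemidef :=
      Matrix.PosSemidef.diagonal hce
    have h1 := (hd.conjTranspose_mul_mul_same (Uᵀ * M)).trace_nonneg
    have h2 : diagonal (fun i => c * hA.eigenvalues i + e)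
        = c • diagonal hA.eigenvalues + e • (1 : Matrix (Fin r) (Fin r) ℝ) := by
      ext i j
      by_cases h : i = j
      · subst h; simp
      · simp [h]
    rw [Matrix.conjTranspose_eq_transpose_of_trivial, h2] at h1
    have h3 : (Uᵀ * M)ᵀ * (c • diagonal hA.eigenvalues + e • (1 : Matrix (Fin r) (Fin r) ℝ)) *
        (Uᵀ * M) = c • (Mᵀ * (U * diagonal hA.eigenvalues * Uᵀ) * M) + e • (Mᵀ * (U * Uᵀ) * M) := by
      simp only [Matrix.transpose_mul, Matrix.transpose_transpose, Matrix.mul_add, Matrix.add_mul,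
        Matrix.mul_smul, Matrix.smul_mul, Matrix.mul_one, Matrix.mul_assoc]
    rw [h3, ← hs, hUU, Matrix.mul_one, Matrix.trace_add, Matrix.trace_smul, Matrix.trace_smul,
      ← trInner_eq_trace, ← frob_sq] at h1
    simpa using h1
  constructor
  · have := hp 1 (-a) (fun i => by linarith [ha i]); linarith
  · have := hp (-1) b (fun i => by linarith [hb i]); linarith

lemma sval_bounds {p r : ℕ} (hr : 0 < r) (Y : Matrix (Fin p) (Fin r) ℝ) (hY : Y.rank = r) :
    0 < sval Y r ∧ sval Y r ≤ sval Y 1 ∧ ∀ (m : ℕ) (M : Matrix (Fin r) (Fin m) ℝ),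
      sval Y r * frob M ≤ frob (Y * M) ∧ frob (Y * M) ≤ sval Y 1 * frob M := by
  have hA : (Yᵀ * Y).IsHermitian := by
    have := Matrix.isHermitian_conjTranspose_mul_self Y
    rwa [Matrix.conjTranspose_eq_transpose_of_trivial] at this
  have hinj : Function.Injective Y.mulVec := by
    rw [Matrix.mulVec_injective_iff]
    rw [linearIndependent_iff_card_eq_finrank_span, Set.finrank, ← Matrix.rank_eq_finrank_span_cols,
      hY, Fintype.card_fin]
  have hpd : (Yᵀ * Y).PosDef := by
    have := Matrix.PosDef.conjTranspose_mul_self Y hinj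
    rwa [Matrix.conjTranspose_eq_transpose_of_trivial] at this
  have hmono := Tuple.monotone_sort hA.eigenvalues
  have er : eigVal (Yᵀ * Y) r = hA.eigenvalues (Tuple.sort hA.eigenvalues ⟨r - r, by omega⟩) := by
    unfold eigVal; rw [dif_pos hA, dif_pos (by omega)]
  have e1 : eigVal (Yᵀ * Y) 1 = hA.eigenvalues (Tuple.sort hA.eigenvalues ⟨r - 1, by omega⟩) := by
    unfold eigVal; rw [dif_pos hA, dif_pos (by omega)]
  have hlo : ∀ i, eigVal (Yᵀ * Y) r ≤ hA.eigenvalues i := by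
    intro i
    rw [er]
    obtain ⟨j, rfl⟩ := (Tuple.sort hA.eigenvalues).surjective i
    exact hmono (by rw [Fin.le_def]; simp)
  have hhi : ∀ i, hA.eigenvalues i ≤ eigVal (Yᵀ * Y) 1 := by
    intro i
    rw [e1]
    obtain ⟨j, rfl⟩ := (Tuple.sort hA.eigenvalues).surjective i
    exact hmono (by rw [Fin.le_def]; simp; omega)
  have hpos : 0 < eigVal (Yᵀ * Y) r := by rw [er]; exact hpd.eigenvalues_pos _
  have hle : eigVal (Yᵀ * Y) r ≤ eigVal (Yᵀ * Y) 1 := by rw [e1]; exact hlo _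
  refine ⟨Real.sqrt_pos.mpr hpos, Real.sqrt_le_sqrt hle, ?_⟩
  intro m M
  have hb := hermitian_bounds _ hA _ _ hlo hhi M
  have ht : (Mᵀ * (Yᵀ * Y) * M).trace = frob (Y * M) ^ 2 := by
    rw [frob_sq, trInner_eq_trace, Matrix.transpose_mul]; simp only [Matrix.mul_assoc]
  rw [ht] at hb
  have s1 : sval Y r ^ 2 = eigVal (Yᵀ * Y) r := Real.sq_sqrt hpos.le
  have s2 : sval Y 1 ^ 2 = eigVal (Yᵀ * Y) 1 := Real.sq_sqrt (hpos.le.trans hle)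
  rw [← s1, ← s2, ← mul_pow, ← mul_pow] at hb
  exact ⟨le_of_sq_le_sq hb.1 (frob_nonneg _),
    le_of_sq_le_sq hb.2 (mul_nonneg (Real.sqrt_nonneg _) (frob_nonneg _))⟩

lemma dOrth_attained {p r : ℕ} (Y₁ Y₂ : Matrix (Fin p) (Fin r) ℝ) :
    ∃ Q : Matrix (Fin r) (Fin r) ℝ, IsOrtho Q ∧ frob (Y₂ * Q - Y₁) = dOrth Y₁ Y₂ := by
  have hK : IsCompact {Q : Matrix (Fin r) (Fin r) ℝ | IsOrtho Q} := by
    have hbig : IsCompact (Set.pi Set.univ (fun _ : Fin r => Set.pi Set.univ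
        (fun _ : Fin r => Set.Icc (-1 : ℝ) 1))) :=
      isCompact_univ_pi (fun _ => isCompact_univ_pi (fun _ => isCompact_Icc))
    refine IsCompact.of_isClosed_subset hbig ?_ ?_
    · apply isClosed_eq
      · exact (continuous_id.matrix_transpose).matrix_mul continuous_id
      · exact continuous_const
    · intro Q hQ i _ j _
      have h := congrFun (congrFun hQ j) j
      simp only [Matrix.mul_apply, Matrix.transpose_apply, Matrix.one_apply_eq] at h
      have : Q i j * Q i j ≤ ∑ k, Q k j * Q k j :=
        Finset.single_le_sum (f := fun k => Q k j * Q k j)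
          (fun k _ => mul_self_nonneg _) (Finset.mem_univ i)
      rw [h] at this
      exact abs_le.mp (abs_le_one_iff_mul_self_le_one.mpr this)
  have hc : Continuous (fun Q : Matrix (Fin r) (Fin r) ℝ => frob (Y₂ * Q - Y₁)) := by
    unfold frob
    apply Real.continuous_sqrt.comp
    refine continuous_finsetSum _ fun i _ => continuous_finsetSum _ fun j _ => ?_
    have : Continuous (fun Q : Matrix (Fin r) (Fin r) ℝ => Y₂ * Q - Y₁) :=
      (continuous_const.matrix_mul continuous_id).sub continuous_const
    exact (this.matrix_elem i j).pow 2
  obtain ⟨Q, hQ, hmin⟩ := hK.exists_isMinOn ⟨1, by simp [IsOrtho]⟩ hc.continuousOn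
  refine ⟨Q, hQ, ?_⟩
  symm
  apply IsLeast.csInf_eq
  refine ⟨⟨Q, hQ, rfl⟩, ?_⟩
  rintro c ⟨Q', hQ', rfl⟩
  exact hmin hQ'

lemma rank_mul_tr_le {p r : ℕ} (A B : Matrix (Fin p) (Fin r) ℝ) : (A * Bᵀ).rank ≤ r :=
  (Matrix.rank_mul_le_left A Bᵀ).trans (by simpa using Matrix.rank_le_width A)

lemma grad_diff_abs {p r : ℕ}
    (f : Matrix (Fin p) (Fin p) ℝ → ℝ)
    (gradf : Matrix (Fin p) (Fin p) ℝ → Matrix (Fin p) (Fin p) ℝ)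
    (hessf : Matrix (Fin p) (Fin p) ℝ → Matrix (Fin p) (Fin p) ℝ → ℝ)
    (hgradf : ∀ X D : Matrix (Fin p) (Fin p) ℝ,
      HasDerivAt (fun t : ℝ => f (X + t • D)) (trInner (gradf X) D) 0)
    (hhessf : ∀ X G : Matrix (Fin p) (Fin p) ℝ,
      HasDerivAt (fun t : ℝ => trInner (gradf (X + t • G)) G) (hessf X G) 0)
    (δ : ℝ)
    (hRSCS : ∀ X G : Matrix (Fin p) (Fin p) ℝ, X.rank ≤ 2 * r → G.rank ≤ 4 * r →
      (1 - δ) * (frob G) ^ 2 ≤ hessf X G ∧ hessf X G ≤ (1 + δ) * (frob G) ^ 2)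
    (A E : Matrix (Fin p) (Fin p) ℝ) (θ : Matrix (Fin p) (Fin r) ℝ)
    (hr1 : ∀ t : ℝ, (A + t • E).rank ≤ r)
    (hr2 : ∀ t : ℝ, (t • E).rank ≤ r) :
    |trInner (gradf (A + E)) (θ * θᵀ) - trInner (gradf A) (θ * θᵀ)| ≤
      (1 + δ) * (frob E * frob (θ * θᵀ)) := by
  have hB : ∀ s : ℝ, (s • (θ * θᵀ)).rank ≤ r := fun s => by
    rw [← Matrix.smul_mul]; exact rank_mul_tr_le _ _
  have g1 := grad_diff f gradf hessf hgradf hhessf δ hRSCS A E (θ * θᵀ)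
    (fun t s => (rank_add_le_aux _ _).trans (by have := hr1 t; have := hB s; omega))
    (fun t s => (rank_add_le_aux _ _).trans (by have := hr2 t; have := hB s; omega))
  have g2 := grad_diff f gradf hessf hgradf hhessf δ hRSCS A E ((-1 : ℝ) • (θ * θᵀ))
    (fun t s => (rank_add_le_aux _ _).trans
      (by have := hr1 t; have := hB (s * -1); rw [smul_smul]; omega))
    (fun t s => (rank_add_le_aux _ _).trans
      (by have := hr2 t; have := hB (s * -1); rw [smul_smul]; omega))
  have c1 := trInner_le E (θ * θᵀ)
  have c2 := trInner_le E ((-1 : ℝ) • (θ * θᵀ))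
  rw [frob_smul] at g2 c2
  simp only [trInner_smul_right, abs_neg, abs_one, one_mul] at g2 c2
  rw [abs_le]
  constructor <;> linarith

lemma N_bound {p r : ℕ} (g : Matrix (Fin p) (Fin p) ℝ) (N : ℝ)
    (hN : N = sSup {c : ℝ | ∃ B : Matrix (Fin p) (Fin p) ℝ,
      B.rank ≤ r ∧ frob B ≤ 1 ∧ c = trInner B g}) (θ : Matrix (Fin p) (Fin r) ℝ) :
    0 ≤ N ∧ |trInner g (θ * θᵀ)| ≤ N * frob (θ * θᵀ) := by
  have hbdd : BddAbove {c : ℝ | ∃ B : Matrix (Fin p) (Fin p) ℝ,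
      B.rank ≤ r ∧ frob B ≤ 1 ∧ c = trInner B g} := by
    refine ⟨frob g, ?_⟩
    rintro c ⟨B, _, hB, rfl⟩
    have := trInner_le B g
    nlinarith [frob_nonneg g]
  have hle : ∀ B : Matrix (Fin p) (Fin p) ℝ, B.rank ≤ r → frob B ≤ 1 → trInner B g ≤ N := by
    intro B h1 h2
    rw [hN]; exact le_csSup hbdd ⟨B, h1, h2, rfl⟩
  have h0 : 0 ≤ N := by
    have := hle 0 (by simp) (by rw [frob_zero]; norm_num)
    simpa [trInner] using this
  refine ⟨h0, ?_⟩
  by_cases hz : frob (θ * θᵀ) = 0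
  · rw [frob_eq_zero hz]; simp [trInner, frob]
  have hp : 0 < frob (θ * θᵀ) := lt_of_le_of_ne (frob_nonneg _) (Ne.symm hz)
  have hB : ∀ s : ℝ, (s • (θ * θᵀ)).rank ≤ r := fun s => by
    rw [← Matrix.smul_mul]; exact rank_mul_tr_le _ _
  have hs : ∀ s : ℝ, |s| = 1 → s * trInner g (θ * θᵀ) ≤ N * frob (θ * θᵀ) := by
    intro s hs
    have := hle ((s / frob (θ * θᵀ)) • (θ * θᵀ)) (hB _)
      (by rw [frob_smul, abs_div, hs, abs_of_pos hp]; field_simp; rfl)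
    rw [trInner_smul_left, trInner_comm] at this
    rw [← div_le_iff₀ hp]
    calc _ = s / frob (θ * θᵀ) * trInner g (θ * θᵀ) := by ring
      _ ≤ N := this
  rw [abs_le]
  have a1 := hs 1 (by simp)
  have a2 := hs (-1) (by simp)
  constructor <;> linarith

end helpers2
section helpers3

set_option maxHeartbeats 1600000 in
lemma core_bounds {p r : ℕ} (hr : 0 < r)
    (f : Matrix (Fin p) (Fin p) ℝ → ℝ)
    (gradf : Matrix (Fin p) (Fin p) ℝ → Matrix (Fin p) (Fin p) ℝ)
    (hessf : Matrix (Fin p) (Fin p) ℝ → Matrix (Fin p) (Fin p) ℝ → ℝ)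
    (hgradf : ∀ X D : Matrix (Fin p) (Fin p) ℝ,
      HasDerivAt (fun t : ℝ => f (X + t • D)) (trInner (gradf X) D) 0)
    (hhessf : ∀ X G : Matrix (Fin p) (Fin p) ℝ,
      HasDerivAt (fun t : ℝ => trInner (gradf (X + t • G)) G) (hessf X G) 0)
    (δ : ℝ) (hδ0 : 0 ≤ δ)
    (hRSCS : ∀ X G : Matrix (Fin p) (Fin p) ℝ, X.rank ≤ 2 * r → G.rank ≤ 4 * r →
      (1 - δ) * (frob G) ^ 2 ≤ hessf X G ∧ hessf X G ≤ (1 + δ) * (frob G) ^ 2)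
    (Ystar : Matrix (Fin p) (Fin r) ℝ) (hYs : Ystar.rank = r)
    (X : Matrix (Fin p) (Fin p) ℝ) (hX : X = Ystar * Ystarᵀ)
    (N : ℝ) (hN : N = sSup {c : ℝ | ∃ B : Matrix (Fin p) (Fin p) ℝ,
      B.rank ≤ r ∧ frob B ≤ 1 ∧ c = trInner B (gradf X)})
    (κ : ℝ) (hκ : κ = sval Ystar 1 / sval Ystar r)
    (μ : ℝ) (hμ0 : 0 ≤ μ) (hμ1 : μ ≤ 1 / 3)
    (Y : Matrix (Fin p) (Fin r) ℝ)
    (hd : dOrth Y Ystar ≤ μ * sval Ystar r / κ)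
    (θ : Matrix (Fin p) (Fin r) ℝ) (hθ : (Yᵀ * θ).IsSymm) :
      ((2 * (1 - μ / κ) ^ 2 - (14 / 3) * μ) * (sval Ystar r) ^ 2 -
          (4 * δ * (sval Ystar 1 + μ * sval Ystar r / κ) ^ 2 +
            (14 / 3) * δ * μ * (sval Ystar r) ^ 2 + 2 * N)) * (frob θ) ^ 2 ≤
        hessf (Y * Yᵀ) (Y * θᵀ + θ * Yᵀ) + 2 * trInner (gradf (Y * Yᵀ)) (θ * θᵀ) ∧
      hessf (Y * Yᵀ) (Y * θᵀ + θ * Yᵀ) + 2 * trInner (gradf (Y * Yᵀ)) (θ * θᵀ) ≤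
        (4 * (sval Ystar 1 + μ * sval Ystar r / κ) ^ 2 + (14 / 3) * μ * (sval Ystar r) ^ 2 +
          4 * δ * (sval Ystar 1 + μ * sval Ystar r / κ) ^ 2 +
          (14 / 3) * δ * μ * (sval Ystar r) ^ 2 + 2 * N) * (frob θ) ^ 2 := by
  obtain ⟨hσr, hσ1r, hσ⟩ := sval_bounds hr Ystar hYs
  obtain ⟨Q, hQ, hQd⟩ := dOrth_attained Y Ystar
  rw [← hQd] at hd
  have hQ' : Q * Qᵀ = 1 := mul_eq_one_comm.mp hQ
  have hQM : ∀ (m : ℕ) (M : Matrix (Fin r) (Fin m) ℝ), frob (Q * M) = frob M := by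
    intro m M
    have : frob (Q * M) ^ 2 = frob M ^ 2 := by
      rw [frob_sq, frob_sq, trInner_eq_trace, trInner_eq_trace, Matrix.transpose_mul,
        Matrix.mul_assoc, ← Matrix.mul_assoc Qᵀ Q M, hQ, Matrix.one_mul]
    exact (sq_eq_sq₀ (frob_nonneg _) (frob_nonneg _)).mp this
  set Z := Ystar * Q with hZ
  set D := Z - Y with hD
  have hYZ : Y = Z - D := by rw [hD]; abel
  have hZX : Z * Zᵀ = X := by
    rw [hX, hZ, Matrix.transpose_mul, Matrix.mul_assoc, ← Matrix.mul_assoc Q, hQ', Matrix.one_mul]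
  have hZM : ∀ (m : ℕ) (M : Matrix (Fin r) (Fin m) ℝ),
      sval Ystar r * frob M ≤ frob (Z * M) ∧ frob (Z * M) ≤ sval Ystar 1 * frob M := by
    intro m M
    have := hσ m (Q * M)
    rwa [hQM, ← Matrix.mul_assoc] at this
  -- gradient estimates
  have g1 := grad_diff_abs f gradf hessf hgradf hhessf δ hRSCS (Y * Yᵀ) (D * Yᵀ) θ
    (fun t => by
      rw [← Matrix.smul_mul, ← Matrix.add_mul]; exact rank_mul_tr_le _ _)
    (fun t => by rw [← Matrix.smul_mul]; exact rank_mul_tr_le _ _)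
  have g2 := grad_diff_abs f gradf hessf hgradf hhessf δ hRSCS (Z * Yᵀ) (Z * Dᵀ) θ
    (fun t => by
      rw [← Matrix.mul_smul, ← Matrix.mul_add, ← Matrix.transpose_smul, ← Matrix.transpose_add]
      exact rank_mul_tr_le _ _)
    (fun t => by
      rw [← Matrix.mul_smul, ← Matrix.transpose_smul]; exact rank_mul_tr_le _ _)
  have e1 : Y * Yᵀ + D * Yᵀ = Z * Yᵀ := by rw [← Matrix.add_mul, hD]; congr 1; abel
  have e2 : Z * Yᵀ + Z * Dᵀ = X := by
    rw [← Matrix.mul_add, ← Matrix.transpose_add, ← hZX, hD]; congr 2; abel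
  rw [e1] at g1
  rw [e2] at g2
  obtain ⟨hN0, hNb⟩ := N_bound (gradf X) N hN θ
  -- Hessian direction
  have hrk : (Y * θᵀ + θ * Yᵀ).rank ≤ 4 * r :=
    (rank_add_le_aux _ _).trans
      (by have := rank_mul_tr_le Y θ; have := rank_mul_tr_le θ Y; omega)
  obtain ⟨hH1, hH2⟩ := hRSCS (Y * Yᵀ) (Y * θᵀ + θ * Yᵀ)
    ((rank_mul_tr_le Y Y).trans (by omega)) hrk
  have hGsq : frob (Y * θᵀ + θ * Yᵀ) ^ 2 = 2 * frob (Y * θᵀ) ^ 2 + 2 * frob (Yᵀ * θ) ^ 2 := by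
    have t1 : frob (θ * Yᵀ) = frob (Y * θᵀ) := by
      rw [← frob_transpose (θ * Yᵀ)]; simp
    have t2 : trInner (Y * θᵀ) (θ * Yᵀ) = frob (Yᵀ * θ) ^ 2 := by
      rw [frob_sq, trInner_eq_trace, trInner_eq_trace, hθ.eq, Matrix.transpose_mul,
        Matrix.transpose_transpose, ← Matrix.mul_assoc, Matrix.trace_mul_comm]
      simp only [Matrix.mul_assoc]
    rw [frob_sq]
    simp only [trInner_add_left, trInner_add_right]
    rw [trInner_comm (θ * Yᵀ) (Y * θᵀ), t2, ← frob_sq, ← frob_sq, t1]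
    ring
  have hGlo : 2 * frob (Y * θᵀ) ^ 2 ≤ frob (Y * θᵀ + θ * Yᵀ) ^ 2 := by
    rw [hGsq]; nlinarith [sq_nonneg (frob (Yᵀ * θ))]
  have hGhi : frob (Y * θᵀ + θ * Yᵀ) ≤ 2 * frob (Y * θᵀ) := by
    have t1 : frob (θ * Yᵀ) = frob (Y * θᵀ) := by
      rw [← frob_transpose (θ * Yᵀ)]; simp
    have := frob_add_le (Y * θᵀ) (θ * Yᵀ)
    linarith
  have hZθ := hZM p θᵀ
  have hDθ := frob_mul_le D θᵀ
  have hYθ1 : frob (Y * θᵀ) ≤ frob (Z * θᵀ) + frob (D * θᵀ) := by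
    have := frob_add_le (Z * θᵀ) (-(D * θᵀ))
    rw [frob_neg, ← sub_eq_add_neg, ← Matrix.sub_mul, ← hYZ] at this
    exact this
  have hYθ2 : frob (Z * θᵀ) ≤ frob (Y * θᵀ) + frob (D * θᵀ) := by
    have := frob_add_le (Y * θᵀ) (D * θᵀ)
    rw [← Matrix.add_mul] at this
    have e : Y + D = Z := by rw [hD]; abel
    rwa [e] at this
  have hE2 := (hZM p Dᵀ).2
  have hE1 : frob (D * Yᵀ) ≤ frob (Z * Dᵀ) + frob (D * Dᵀ) := by
    have := frob_add_le (Z * Dᵀ) (-(D * Dᵀ))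
    rw [frob_neg, ← sub_eq_add_neg, ← Matrix.sub_mul, ← hYZ, ← frob_transpose (Y * Dᵀ)] at this
    simpa using this
  have hDD := frob_mul_le D Dᵀ
  have hθθ := frob_mul_le θ θᵀ
  rw [frob_transpose] at hZθ hDθ hE2 hDD hθθ
  have hd0 := frob_nonneg D
  have hT0 := frob_nonneg θ
  have hB0 := frob_nonneg (θ * θᵀ)
  have hYθ0 := frob_nonneg (Y * θᵀ)
  have hG0 := frob_nonneg (Y * θᵀ + θ * Yᵀ)
  set T := frob θ
  set d := frob D
  set b := frob (θ * θᵀ)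
  set y := frob (Y * θᵀ)
  set G := frob (Y * θᵀ + θ * Yᵀ)
  set σr := sval Ystar r
  set σ1 := sval Ystar 1
  set ν := μ * σr / κ with hν
  have hσ1 : 0 < σ1 := hσr.trans_le hσ1r
  have hκ1 : 1 ≤ κ := by rw [hκ, le_div_iff₀ hσr]; linarith
  have hκ0 : 0 < κ := by linarith
  have hκσ : σ1 = κ * σr := by rw [hκ]; field_simp
  have hμκ : μ / κ ≤ μ := div_le_self hμ0 hκ1
  have hμκ0 : 0 ≤ μ / κ := by positivity
  have hν1 : ν = σr * (μ / κ) := by rw [hν]; ring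
  have hν0 : 0 ≤ ν := by rw [hν1]; positivity
  have hσν : σ1 * ν = μ * σr ^ 2 := by rw [hν, hκσ]; field_simp
  have hνν : ν ^ 2 ≤ μ * σr ^ 2 / 3 := by
    have : (μ / κ) ^ 2 ≤ μ / 3 := by nlinarith
    rw [hν1, mul_pow]; nlinarith [sq_nonneg σr]
  have hsum : frob (D * Yᵀ) + frob (Z * Dᵀ) ≤ 7 / 3 * μ * σr ^ 2 := by
    have a1 : σ1 * d ≤ σ1 * ν := mul_le_mul_of_nonneg_left hd hσ1.le
    have a2 : d * d ≤ ν ^ 2 := by nlinarith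
    linarith
  have hbT : b ≤ T ^ 2 := by rw [sq]; exact hθθ
  have hyhi : y ≤ (σ1 + ν) * T := by
    have : d * T ≤ ν * T := mul_le_mul_of_nonneg_right hd hT0
    linarith [hZθ.2]
  have hylo : σr * (1 - μ / κ) * T ≤ y := by
    have : d * T ≤ ν * T := mul_le_mul_of_nonneg_right hd hT0
    rw [hν1] at this
    linarith [hZθ.1]
  have hGhi' : G ^ 2 ≤ 4 * (σ1 + ν) ^ 2 * T ^ 2 := by
    have : G ≤ 2 * ((σ1 + ν) * T) := by linarith
    have := pow_le_pow_left₀ hG0 this 2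
    linarith
  have hGlo' : 2 * (1 - μ / κ) ^ 2 * σr ^ 2 * T ^ 2 ≤ G ^ 2 := by
    have h0 : 0 ≤ σr * (1 - μ / κ) * T := by
      apply mul_nonneg (mul_nonneg hσr.le _) hT0; linarith
    have := pow_le_pow_left₀ h0 hylo 2
    linarith
  have hgrad : |trInner (gradf (Y * Yᵀ)) (θ * θᵀ)| ≤
      ((1 + δ) * (7 / 3 * μ * σr ^ 2) + N) * T ^ 2 := by
    have i1 : |trInner (gradf (Y * Yᵀ)) (θ * θᵀ)| ≤
        ((1 + δ) * (frob (D * Yᵀ) + frob (Z * Dᵀ)) + N) * b := by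
      rw [abs_le] at g1 g2 hNb ⊢
      constructor <;> linarith [g1.1, g1.2, g2.1, g2.2, hNb.1, hNb.2]
    refine i1.trans ?_
    have i2 : (1 + δ) * (frob (D * Yᵀ) + frob (Z * Dᵀ)) ≤ (1 + δ) * (7 / 3 * μ * σr ^ 2) :=
      mul_le_mul_of_nonneg_left hsum (by linarith)
    have i3 : 0 ≤ (1 + δ) * (7 / 3 * μ * σr ^ 2) + N := by positivity
    exact mul_le_mul (by linarith) hbT hB0 i3
  rw [abs_le] at hgrad
  have hδG : δ * G ^ 2 ≤ δ * (4 * (σ1 + ν) ^ 2 * T ^ 2) := mul_le_mul_of_nonneg_left hGhi' hδ0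
  constructor
  · linarith [hgrad.1]
  · linarith [hgrad.2]

end helpers3

/-- local geodesic strong convexity of `h`: two-sided bounds on the lifted
Riemannian Hessian quadratic form of `h([Y]) = f(YYᵀ)` near `Ystar`, and strong convexity
under the stated conditions on `μ`, `δ` and `N`. -/
theorem stmt12 {p r : ℕ}
    (f : Matrix (Fin p) (Fin p) ℝ → ℝ)
    (gradf : Matrix (Fin p) (Fin p) ℝ → Matrix (Fin p) (Fin p) ℝ)
    (hessf : Matrix (Fin p) (Fin p) ℝ → Matrix (Fin p) (Fin p) ℝ → ℝ)
    (hgradf : ∀ X D : Matrix (Fin p) (Fin p) ℝ,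
      HasDerivAt (fun t : ℝ => f (X + t • D)) (trInner (gradf X) D) 0)
    (hhessf : ∀ X G : Matrix (Fin p) (Fin p) ℝ,
      HasDerivAt (fun t : ℝ => trInner (gradf (X + t • G)) G) (hessf X G) 0)
    (δ : ℝ) (hδ0 : 0 ≤ δ) (hδ1 : δ < 1)
    (hRSCS : ∀ X G : Matrix (Fin p) (Fin p) ℝ, X.rank ≤ 2 * r → G.rank ≤ 4 * r →
      (1 - δ) * (frob G) ^ 2 ≤ hessf X G ∧ hessf X G ≤ (1 + δ) * (frob G) ^ 2)
    (Ystar : Matrix (Fin p) (Fin r) ℝ) (hYs : Ystar.rank = r)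
    (X : Matrix (Fin p) (Fin p) ℝ) (hX : X = Ystar * Ystarᵀ)
    (N : ℝ) (hN : N = sSup {c : ℝ | ∃ B : Matrix (Fin p) (Fin p) ℝ,
      B.rank ≤ r ∧ frob B ≤ 1 ∧ c = trInner B (gradf X)})
    (κ : ℝ) (hκ : κ = sval Ystar 1 / sval Ystar r)
    (μ : ℝ) (hμ0 : 0 ≤ μ) (hμ1 : μ ≤ 1 / 3)
    (Y : Matrix (Fin p) (Fin r) ℝ) (hY : Y.rank = r)
    (hd : dOrth Y Ystar ≤ μ * sval Ystar r / κ) :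
    (∀ θ : Matrix (Fin p) (Fin r) ℝ, (Yᵀ * θ).IsSymm →
      ((2 * (1 - μ / κ) ^ 2 - (14 / 3) * μ) * (sval Ystar r) ^ 2 -
          (4 * δ * (sval Ystar 1 + μ * sval Ystar r / κ) ^ 2 +
            (14 / 3) * δ * μ * (sval Ystar r) ^ 2 + 2 * N)) * (frob θ) ^ 2 ≤
        hessf (Y * Yᵀ) (Y * θᵀ + θ * Yᵀ) + 2 * trInner (gradf (Y * Yᵀ)) (θ * θᵀ) ∧
      hessf (Y * Yᵀ) (Y * θᵀ + θ * Yᵀ) + 2 * trInner (gradf (Y * Yᵀ)) (θ * θᵀ) ≤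
        (4 * (sval Ystar 1 + μ * sval Ystar r / κ) ^ 2 + (14 / 3) * μ * (sval Ystar r) ^ 2 +
          4 * δ * (sval Ystar 1 + μ * sval Ystar r / κ) ^ 2 +
          (14 / 3) * δ * μ * (sval Ystar r) ^ 2 + 2 * N) * (frob θ) ^ 2) ∧
    ((1 - μ / κ) ^ 2 - 7 * μ / 3 > 0 →
      δ ≤ ((1 - μ / κ) ^ 2 - 7 * μ / 3) / (4 * (2 * (κ + μ / κ) ^ 2 + 7 * μ / 3)) →
      N ≤ ((1 - μ / κ) ^ 2 - 7 * μ / 3) * (sval Ystar r) ^ 2 / 4 →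
      ∀ θ : Matrix (Fin p) (Fin r) ℝ, (Yᵀ * θ).IsSymm →
        ((1 - μ / κ) ^ 2 - 7 * μ / 3) * (sval Ystar r) ^ 2 * (frob θ) ^ 2 ≤
          hessf (Y * Yᵀ) (Y * θᵀ + θ * Yᵀ) + 2 * trInner (gradf (Y * Yᵀ)) (θ * θᵀ)) := by
  rcases Nat.eq_zero_or_pos r with hr | hr
  · subst hr
    have hz : ∀ θ : Matrix (Fin p) (Fin 0) ℝ, frob θ = 0 := fun θ => by simp [frob]
    have hq : ∀ θ : Matrix (Fin p) (Fin 0) ℝ,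
        hessf (Y * Yᵀ) (Y * θᵀ + θ * Yᵀ) + 2 * trInner (gradf (Y * Yᵀ)) (θ * θᵀ) = 0 := by
      intro θ
      have h1 : Y * θᵀ + θ * Yᵀ = 0 := by ext i j; simp [Matrix.mul_apply]
      have h2 : θ * θᵀ = 0 := by ext i j; simp [Matrix.mul_apply]
      have h3 := hRSCS (Y * Yᵀ) 0 (rank_mul_tr_le Y Y) (by simp)
      rw [frob_zero] at h3
      have h4 : hessf (Y * Yᵀ) 0 = 0 := by linarith [h3.1, h3.2]
      rw [h1, h2, h4]; simp [trInner]
    refine ⟨fun θ _ => ?_, fun _ _ _ θ _ => ?_⟩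
    · rw [hq θ, hz θ]; simp
    · rw [hq θ, hz θ]; simp
  have core := core_bounds hr f gradf hessf hgradf hhessf δ hδ0 hRSCS Ystar hYs X hX N hN κ hκ μ
    hμ0 hμ1 Y hd
  refine ⟨core, fun ha hδ hNa θ hθ => ?_⟩
  obtain ⟨hσr, hσ1r, -⟩ := sval_bounds hr Ystar hYs
  refine le_trans ?_ (core θ hθ).1
  apply mul_le_mul_of_nonneg_right _ (sq_nonneg _)
  have hκ0 : 0 < κ := by rw [hκ]; exact div_pos (hσr.trans_le hσ1r) hσr
  have hκσ : sval Ystar 1 = κ * sval Ystar r := by rw [hκ]; field_simp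
  have hden : 0 < 4 * (2 * (κ + μ / κ) ^ 2 + 7 * μ / 3) := by positivity
  rw [le_div_iff₀ hden] at hδ
  have e : (sval Ystar 1 + μ * sval Ystar r / κ) ^ 2 = (κ + μ / κ) ^ 2 * sval Ystar r ^ 2 := by
    rw [hκσ]; ring
  rw [e]
  have := mul_le_mul_of_nonneg_right hδ (sq_nonneg (sval Ystar r))
  linarith
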